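/- Let m ≥ 2 be an integer and θ ∈ (0,2). There exists a constant C = C(m,θ) such that for every integer N ≥ 1, ∑_{k∈ℤ, |k|>N} ∑_{ℓ∈ℤ, |ℓ|≤N} |ℓ−k|^{−2m} (|ℓ|+1)^{−θ} ≤ C (N^{−θ} + N^{−(2m−2)}) ≤ 2C N^{−θ}. -/

import Mathlib

open Real

lemma dsb_pointwise (m : ℕ) (hm : 2 ≤ m) (θ : ℝ) (hθ0 : 0 < θ) (hθ2 : θ < 2) (N : ℕ) (hN : 1 ≤ N)
    (k l : ℤ) (hk : (N : ℤ) < |k|) (hl : |l| ≤ (N : ℤ)) :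
    |(l : ℝ) - (k : ℝ)| ^ (-(2 * (m : ℝ))) * (|(l : ℝ)| + 1) ^ (-θ) ≤
      (N : ℝ) ^ (-θ) * ((|(k : ℝ)| - N) ^ (-(2 - θ / 2)) * (N + 1 - |(l : ℝ)|) ^ (-(2 - θ / 2))) := by
  have hk' : (N : ℝ) + 1 ≤ |(k : ℝ)| := by exact_mod_cast hk
  have hl' : |(l : ℝ)| ≤ (N : ℝ) := by exact_mod_cast hl
  have hm' : (2 : ℝ) ≤ m := by exact_mod_cast hm
  have hN' : (1 : ℝ) ≤ N := by exact_mod_cast hN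
  have hd : |(k : ℝ)| - |(l : ℝ)| ≤ |(l : ℝ) - k| := by
    rw [abs_sub_comm]; exact abs_sub_abs_le_abs_sub _ _
  have hl0 := abs_nonneg (l : ℝ)
  generalize |(l : ℝ) - k| = d at *
  generalize |(k : ℝ)| = x at *
  generalize |(l : ℝ)| = y at *
  have hd1 : 1 ≤ d := by linarith
  have hd0 : 0 < d := by linarith
  have h1 : d ^ (-(2 * (m : ℝ))) ≤ d ^ (-(4:ℝ)) :=
    Real.rpow_le_rpow_of_exponent_le hd1 (by linarith)
  have h2 : (y + 1) ^ (-θ) ≤ (N : ℝ) ^ (-θ) * d ^ θ := by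
    have : (N : ℝ) / d ≤ y + 1 := by
      rw [div_le_iff₀ hd0]
      nlinarith
    calc (y + 1) ^ (-θ) ≤ ((N : ℝ) / d) ^ (-θ) :=
          Real.rpow_le_rpow_of_nonpos (by positivity) this (by linarith)
      _ = _ := by
          rw [Real.div_rpow (by positivity) hd0.le, Real.rpow_neg hd0.le, div_inv_eq_mul]
  have h3 : d ^ (-(2 - θ / 2)) ≤ (x - N) ^ (-(2 - θ / 2)) :=
    Real.rpow_le_rpow_of_nonpos (by linarith) (by linarith) (by linarith)
  have h4 : d ^ (-(2 - θ / 2)) ≤ (N + 1 - y) ^ (-(2 - θ / 2)) :=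
    Real.rpow_le_rpow_of_nonpos (by linarith) (by linarith) (by linarith)
  calc d ^ (-(2 * (m : ℝ))) * (y + 1) ^ (-θ) ≤ d ^ (-(4:ℝ)) * ((N : ℝ) ^ (-θ) * d ^ θ) := by
        gcongr
    _ = (N : ℝ) ^ (-θ) * (d ^ (-(2 - θ / 2)) * d ^ (-(2 - θ / 2))) := by
        have : d ^ (-(4:ℝ)) * d ^ θ = d ^ (-(2 - θ / 2)) * d ^ (-(2 - θ / 2)) := by
          rw [← Real.rpow_add hd0, ← Real.rpow_add hd0]; congr 1; ring
        rw [← this]; ring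
    _ ≤ _ := by
        have : 0 ≤ d ^ (-(2 - θ / 2)) := by positivity
        exact mul_le_mul_of_nonneg_left (mul_le_mul h3 h4 this (this.trans h3)) (by positivity)

/-- Double sum estimate (second off-diagonal block): for `m ≥ 2` and `θ ∈ (0,2)` there is a
constant `C` such that for every `N ≥ 1`,
`∑_{|k|>N} ∑_{|ℓ|≤N} |ℓ−k|^{−2m} (|ℓ|+1)^{−θ} ≤ C (N^{−θ} + N^{−(2m−2)}) ≤ 2C N^{−θ}`. -/
theorem double_sum_block_estimate_high_low
    (m : ℕ) (hm : 2 ≤ m) (θ : ℝ) (hθ0 : 0 < θ) (hθ2 : θ < 2) :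
    ∃ C : ℝ, 0 < C ∧ ∀ N : ℕ, 1 ≤ N →
      (∑' k : ℤ, ∑' l : ℤ,
        if (N : ℤ) < |k| ∧ |l| ≤ (N : ℤ) then
          |(l : ℝ) - (k : ℝ)| ^ (-(2 * (m : ℝ))) * (|(l : ℝ)| + 1) ^ (-θ)
        else 0) ≤ C * ((N : ℝ) ^ (-θ) + (N : ℝ) ^ (-(2 * (m : ℝ) - 2))) ∧
      C * ((N : ℝ) ^ (-θ) + (N : ℝ) ^ (-(2 * (m : ℝ) - 2))) ≤ 2 * C * (N : ℝ) ^ (-θ) := by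
  obtain ⟨h, hh⟩ : ∃ h : ℤ → ℝ, h = fun n : ℤ => |(n : ℝ)| ^ (-(2 - θ / 2)) := ⟨_, rfl⟩
  have hs : Summable h := by
    rw [hh]; exact Real.summable_abs_int_rpow (by linarith)
  have h0 : ∀ n, 0 ≤ h n := fun n => by rw [hh]; positivity
  obtain ⟨H, hH⟩ : ∃ H : ℝ, H = ∑' n, h n := ⟨_, rfl⟩
  have hH' : HasSum h H := by rw [hH]; exact hs.hasSum
  have hm' : (2 : ℝ) ≤ m := by exact_mod_cast hm
  refine ⟨(H + H) * (H + H) + 1, by nlinarith [mul_self_nonneg (H + H)], fun N hN => ?_⟩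
  have hN' : (1 : ℝ) ≤ N := by exact_mod_cast hN
  have hC : 0 < (H + H) * (H + H) + 1 := by nlinarith [mul_self_nonneg (H + H)]
  have hF : HasSum (fun k : ℤ => h (k + -N) + h (k + N)) (H + H) :=
    ((Equiv.addRight (-(N:ℤ))).hasSum_iff.2 hH').add ((Equiv.addRight (N:ℤ)).hasSum_iff.2 hH')
  have hG : HasSum (fun l : ℤ => h (((N:ℤ) + 1) - l) + h (l + ((N:ℤ) + 1))) (H + H) :=
    ((Equiv.subLeft ((N:ℤ) + 1)).hasSum_iff.2 hH').add
      ((Equiv.addRight ((N:ℤ) + 1)).hasSum_iff.2 hH')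
  have hFk : ∀ k : ℤ, (N : ℤ) < |k| →
      (|(k : ℝ)| - N) ^ (-(2 - θ / 2)) ≤ h (k + -N) + h (k + N) := by
    intro k hk
    have hk' : (N : ℝ) < |(k : ℝ)| := by exact_mod_cast hk
    rcases abs_cases (k : ℝ) with ⟨e, _⟩ | ⟨e, _⟩
    · have : h (k + -N) = (|(k : ℝ)| - N) ^ (-(2 - θ / 2)) := by
        rw [hh]; simp only; push_cast
        rw [abs_of_nonneg (by linarith : (0:ℝ) ≤ k + -N), e]; rfl
      linarith [h0 (k + N)]
    · have : h (k + N) = (|(k : ℝ)| - N) ^ (-(2 - θ / 2)) := by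
        rw [hh]; simp only; push_cast
        rw [abs_of_nonpos (by linarith : (k + N : ℝ) ≤ 0), e]; congr 1; ring
      linarith [h0 (k + -N)]
  have hGl : ∀ l : ℤ, |l| ≤ (N : ℤ) →
      (N + 1 - |(l : ℝ)|) ^ (-(2 - θ / 2)) ≤ h (((N:ℤ) + 1) - l) + h (l + ((N:ℤ) + 1)) := by
    intro l hl
    have hl' : |(l : ℝ)| ≤ (N : ℝ) := by exact_mod_cast hl
    rcases abs_cases (l : ℝ) with ⟨e, _⟩ | ⟨e, _⟩
    · have : h (((N:ℤ) + 1) - l) = (N + 1 - |(l : ℝ)|) ^ (-(2 - θ / 2)) := by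
        rw [hh]; simp only; push_cast
        rw [abs_of_nonneg (by linarith : (0:ℝ) ≤ N + 1 - l), e]
      linarith [h0 (l + ((N:ℤ) + 1))]
    · have : h (l + ((N:ℤ) + 1)) = (N + 1 - |(l : ℝ)|) ^ (-(2 - θ / 2)) := by
        rw [hh]; simp only; push_cast
        rw [abs_of_nonneg (by linarith : (0:ℝ) ≤ l + (N + 1)), e]; congr 1; ring
      linarith [h0 (((N:ℤ) + 1) - l)]
  have hterm0 : ∀ k l : ℤ, 0 ≤ (if (N : ℤ) < |k| ∧ |l| ≤ (N : ℤ) then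
          |(l : ℝ) - (k : ℝ)| ^ (-(2 * (m : ℝ))) * (|(l : ℝ)| + 1) ^ (-θ)
        else 0) := fun k l => by split_ifs <;> positivity
  have hterm : ∀ k l : ℤ, (if (N : ℤ) < |k| ∧ |l| ≤ (N : ℤ) then
          |(l : ℝ) - (k : ℝ)| ^ (-(2 * (m : ℝ))) * (|(l : ℝ)| + 1) ^ (-θ)
        else 0) ≤ ((N : ℝ) ^ (-θ) * (h (k + -N) + h (k + N))) *
          (h (((N:ℤ) + 1) - l) + h (l + ((N:ℤ) + 1))) := by
    intro k l
    have hF0 : 0 ≤ h (k + -N) + h (k + N) := add_nonneg (h0 _) (h0 _)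
    have hG0 : 0 ≤ h (((N:ℤ) + 1) - l) + h (l + ((N:ℤ) + 1)) := add_nonneg (h0 _) (h0 _)
    split_ifs with hc
    · refine (dsb_pointwise m hm θ hθ0 hθ2 N hN k l hc.1 hc.2).trans ?_
      rw [mul_assoc]
      have hl' : |(l : ℝ)| ≤ (N : ℝ) := by exact_mod_cast hc.2
      refine mul_le_mul_of_nonneg_left ?_ (by positivity)
      exact mul_le_mul (hFk k hc.1) (hGl l hc.2) (Real.rpow_nonneg (by linarith) _) hF0
    · positivity
  have hin : ∀ k : ℤ, (∑' l : ℤ, if (N : ℤ) < |k| ∧ |l| ≤ (N : ℤ) then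
          |(l : ℝ) - (k : ℝ)| ^ (-(2 * (m : ℝ))) * (|(l : ℝ)| + 1) ^ (-θ)
        else 0) ≤ ((N : ℝ) ^ (-θ) * (h (k + -N) + h (k + N))) * (H + H) := by
    intro k
    have hb := hG.mul_left ((N : ℝ) ^ (-θ) * (h (k + -N) + h (k + N)))
    rw [← hb.tsum_eq]
    exact (Summable.of_nonneg_of_le (hterm0 k) (hterm k) hb.summable).tsum_le_tsum
      (hterm k) hb.summable
  have hout := (hF.mul_left ((N : ℝ) ^ (-θ))).mul_right (H + H)
  have hsum := (Summable.of_nonneg_of_le (fun k => tsum_nonneg (hterm0 k)) hin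
    hout.summable).tsum_le_tsum hin hout.summable
  rw [hout.tsum_eq] at hsum
  have hp1 : 0 < (N : ℝ) ^ (-θ) := by positivity
  have hp2 : 0 < (N : ℝ) ^ (-(2 * (m : ℝ) - 2)) := by positivity
  constructor
  · refine hsum.trans ?_
    nlinarith [mul_pos hC hp2]
  · have : (N : ℝ) ^ (-(2 * (m : ℝ) - 2)) ≤ (N : ℝ) ^ (-θ) :=
      Real.rpow_le_rpow_of_exponent_le hN' (by linarith)
    nlinarith
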